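/- arXiv:1703.03545 — 2 statements merged into one kernel-verified Lean document; each statement's English description precedes it below -/
import Mathlib

section
/- Let k be a field of characteristic 2 and r ≥ 3. Let the symmetric group S_r act on the quotient ring R = k[x_1,…,x_r]/(x_1+⋯+x_r) by permuting the variables. Then the ring of S_r-invariants of R is the polynomial ring k[c_2,…,c_r], where c_i denotes the image of the i-th elementary symmetric polynomial in x_1,…,x_r. -/
open MvPolynomial

namespace PermInv

lemma irr_of_lin {k : Type*} [Field k] {n : ℕ} {p : MvPolynomial (Fin n) k}
    (hp : p.IsHomogeneous 1) (h0 : p ≠ 0) : Irreducible p := by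
  apply irreducible_of_totalDegree_eq_one (hp.totalDegree h0)
  intro x hx
  obtain ⟨d, hd⟩ := MvPolynomial.ne_zero_iff.mp h0
  rw [isUnit_iff_ne_zero]
  rintro rfl
  exact hd (zero_dvd_iff.mp (hx d))

lemma irr_sub {k : Type*} [Field k] {n : ℕ} {i j : Fin n} (h : i ≠ j) :
    Irreducible (X i - X j : MvPolynomial (Fin n) k) := by
  apply irr_of_lin ((isHomogeneous_X k i).sub (isHomogeneous_X k j))
  rw [sub_ne_zero]
  exact fun h' => h (X_injective h')

lemma not_dvd_of_eval {k : Type*} [Field k] {n : ℕ} {p q : MvPolynomial (Fin n) k}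
    (v : Fin n → k) (hp : eval v p = 0) (hq : eval v q ≠ 0) : ¬ p ∣ q := by
  rintro ⟨c, rfl⟩
  simp [hp] at hq

lemma relprime {k : Type*} [Field k] {n : ℕ} {i j l m : Fin n} (h1 : i < j) (h2 : l < m)
    (hne : ¬ (i = l ∧ j = m)) :
    IsRelPrime (X j - X i : MvPolynomial (Fin n) k) (X m - X l) := by
  rw [(irr_sub h1.ne').isRelPrime_iff_not_dvd]
  have : (l ≠ i ∧ l ≠ j) ∨ (m ≠ i ∧ m ≠ j) := by
    by_contra hh
    apply hne
    constructor <;> omega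
  rcases this with ⟨ha, hb⟩ | ⟨ha, hb⟩
  · apply not_dvd_of_eval (Pi.single l 1)
    · simp [Pi.single_apply, ha.symm, hb.symm]
    · simp [Pi.single_apply, h2.ne']
  · apply not_dvd_of_eval (Pi.single m 1)
    · simp [Pi.single_apply, ha.symm, hb.symm]
    · simp [Pi.single_apply, h2.ne]

lemma vdm_dvd {k : Type*} [Field k] {n : ℕ} (N : MvPolynomial (Fin n) k)
    (h : ∀ i j : Fin n, i ≠ j → (X i - X j) ∣ N) :
    (Matrix.vandermonde (X : Fin n → MvPolynomial (Fin n) k)).det ∣ N := by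
  rw [Matrix.det_vandermonde, Finset.prod_sigma']
  apply Finset.prod_dvd_of_isRelPrime
  · rintro ⟨i, j⟩ hij ⟨l, m⟩ hlm hne
    simp at hij hlm
    apply relprime hij hlm
    rintro ⟨rfl, rfl⟩
    exact hne rfl
  · rintro ⟨i, j⟩ hij
    simp at hij
    exact h _ _ hij.ne'

/-- The sum over all permutations. -/
noncomputable def tr {k : Type*} [Field k] {n : ℕ} (f : MvPolynomial (Fin n) k) :
    MvPolynomial (Fin n) k := ∑ w : Equiv.Perm (Fin n), rename w f

lemma tr_symm {k : Type*} [Field k] {n : ℕ} (f : MvPolynomial (Fin n) k) :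
    (tr f).IsSymmetric := by
  intro s
  rw [tr, map_sum]
  refine Fintype.sum_equiv (Equiv.mulLeft s) _ _ fun w => ?_
  simp [rename_rename, Equiv.Perm.coe_mul]

lemma tr_dvd {k : Type*} [Field k] [CharP k 2] {n : ℕ} (f : MvPolynomial (Fin n) k)
    (i j : Fin n) (hij : i ≠ j) : (X i - X j) ∣ tr f := by
  rw [← Ideal.mem_span_singleton, ← Ideal.Quotient.eq_zero_iff_mem, tr, map_sum]
  set J := Ideal.span ({X i - X j} : Set (MvPolynomial (Fin n) k)) with hJ
  have key : ∀ g, Ideal.Quotient.mk J (rename (Equiv.swap i j) g) = Ideal.Quotient.mk J g := by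
    intro g
    have : (Ideal.Quotient.mkₐ k J).comp (rename (Equiv.swap i j)) = Ideal.Quotient.mkₐ k J := by
      have hh : Ideal.Quotient.mk J (X i) = Ideal.Quotient.mk J (X j) := by
        rw [Ideal.Quotient.eq]
        exact Ideal.mem_span_singleton_self _
      ext l
      simp only [AlgHom.comp_apply, rename_X, Ideal.Quotient.mkₐ_eq_mk]
      by_cases h1 : l = i
      · subst h1; simp [hh]
      by_cases h2 : l = j
      · subst h2; simp [hh]
      rw [Equiv.swap_apply_of_ne_of_ne h1 h2]
    exact DFunLike.congr_fun this g
  refine Finset.sum_involution (fun w _ => Equiv.swap i j * w) ?_ ?_ ?_ ?_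
  · intro w _
    rw [Equiv.Perm.coe_mul, ← rename_rename, key, ← map_add, CharTwo.add_self_eq_zero, map_zero]
  · intro w _ _ h
    exact hij (Equiv.swap_eq_one_iff.mp (mul_eq_right.mp h))
  · simp
  · intro w _
    simp

/-- The staircase monomial. -/
noncomputable def stair (k : Type*) [Field k] (n : ℕ) : MvPolynomial (Fin n) k :=
  ∏ i : Fin n, X i ^ (i : ℕ)

lemma tr_stair {k : Type*} [Field k] [CharP k 2] {n : ℕ} :
    tr (stair k n) = (Matrix.vandermonde (X : Fin n → MvPolynomial (Fin n) k)).det := by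
  rw [Matrix.det_apply', tr]
  refine Finset.sum_congr rfl fun w _ => ?_
  have : ((Equiv.Perm.sign w : ℤ) : MvPolynomial (Fin n) k) = 1 := by
    rcases Int.units_eq_one_or (Equiv.Perm.sign w) with h | h <;> simp [h, CharTwo.neg_eq]
  rw [this, one_mul, stair, map_prod]
  simp [Matrix.vandermonde_apply]

lemma irr_e1 {k : Type*} [Field k] {n : ℕ} (hn : 0 < n) :
    Irreducible (∑ i : Fin n, X i : MvPolynomial (Fin n) k) := by
  apply irr_of_lin (IsHomogeneous.sum _ _ _ fun i _ => isHomogeneous_X k i)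
  intro h
  have := congrArg (eval (Pi.single ⟨0, hn⟩ 1)) h
  simp at this

lemma symm_of_mul {k : Type*} [Field k] {n : ℕ} {p q : MvPolynomial (Fin n) k}
    (hp : p.IsSymmetric) (h0 : p ≠ 0) (hpq : (p * q).IsSymmetric) : q.IsSymmetric := by
  intro s
  have := hpq s
  rw [map_mul, hp s] at this
  exact mul_left_cancel₀ h0 this

lemma vdm_not_dvd {k : Type*} [Field k] [CharP k 2] {n : ℕ} (hn : 3 ≤ n) :
    ¬ (∑ i : Fin n, X i : MvPolynomial (Fin n) k) ∣
      (Matrix.vandermonde (X : Fin n → MvPolynomial (Fin n) k)).det := by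
  have hp : Prime (∑ i : Fin n, X i : MvPolynomial (Fin n) k) := (irr_e1 (by omega)).prime
  rw [Matrix.det_vandermonde, Finset.prod_sigma', hp.dvd_finsetProd_iff]
  rintro ⟨⟨i, j⟩, hij, hd⟩
  simp at hij
  obtain ⟨m, hm⟩ : ∃ m : Fin n, m ∉ ({i, j} : Finset (Fin n)) := by
    by_contra! hh
    have h1 : (Finset.univ : Finset (Fin n)) ⊆ {i, j} := fun x _ => hh x
    have := Finset.card_le_card h1
    have := Finset.card_le_two (a := i) (b := j)
    simp at *
    omega
  simp at hm
  refine not_dvd_of_eval (Pi.single i 1 + Pi.single m 1) ?_ ?_ hd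
  · simp [Finset.sum_add_distrib, CharTwo.add_self_eq_zero]
  · simp [Pi.single_apply, hij.ne', Ne.symm hm.2, Ne.symm hm.1]

/-- Every polynomial invariant modulo `e₁` is symmetric modulo `e₁`. -/
lemma exists_symm {k : Type*} [Field k] [CharP k 2] {n : ℕ} (hn : 3 ≤ n)
    (f : MvPolynomial (Fin n) k)
    (hf : ∀ s : Equiv.Perm (Fin n), (∑ i : Fin n, X i) ∣ rename s f - f) :
    ∃ h : MvPolynomial (Fin n) k, h.IsSymmetric ∧ (∑ i : Fin n, X i) ∣ h - f := by
  have hp : Prime (∑ i : Fin n, X i : MvPolynomial (Fin n) k) := (irr_e1 (by omega)).prime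
  obtain ⟨h, hh⟩ := vdm_dvd _ (tr_dvd (stair k n * f))
  have hD := vdm_not_dvd (k := k) hn
  have hD0 : (Matrix.vandermonde (X : Fin n → MvPolynomial (Fin n) k)).det ≠ 0 := by
    intro h; rw [h] at hD; exact hD (dvd_zero _)
  refine ⟨h, symm_of_mul (tr_stair (k := k) ▸ tr_symm _) hD0 (hh ▸ tr_symm _), ?_⟩
  have : (∑ i : Fin n, X i) ∣ (Matrix.vandermonde (X : Fin n → MvPolynomial (Fin n) k)).det
      * (h - f) := by
    rw [mul_sub, ← hh, ← tr_stair, tr, tr, Finset.sum_mul, ← Finset.sum_sub_distrib]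
    refine Finset.dvd_sum fun w _ => ?_
    rw [map_mul, ← mul_sub]
    exact (hf w).mul_left _
  exact (hp.dvd_or_dvd this).resolve_left hD

end PermInv



/-- Let `k` be a field of characteristic 2 and `r ≥ 3`. Let `S_r`
act on `R = k[x₁,…,x_r]/(x₁+⋯+x_r)` by permuting the variables (the action on the
quotient is encoded by any family `φ` of algebra maps compatible with `rename`).
Then the ring of `S_r`-invariants of `R` is the polynomial ring `k[c₂,…,c_r]`,
where `c_i` is the image of the `i`-th elementary symmetric polynomial:
invariants equal the subalgebra generated by the `c_i`, and the `c_i` are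
algebraically independent over `k`. -/
theorem invariants_of_perm_action_on_quotient
    (k : Type*) [Field k] [CharP k 2] (r : ℕ) (hr : 3 ≤ r)
    (I : Ideal (MvPolynomial (Fin r) k))
    (hI : I = Ideal.span ({∑ i : Fin r, X i} : Set (MvPolynomial (Fin r) k)))
    (φ : Equiv.Perm (Fin r) → ((MvPolynomial (Fin r) k ⧸ I) →ₐ[k] (MvPolynomial (Fin r) k ⧸ I)))
    (hφ : ∀ σ f, φ σ (Ideal.Quotient.mk I f) = Ideal.Quotient.mk I (rename σ f))
    (c : Fin (r - 1) → (MvPolynomial (Fin r) k ⧸ I))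
    (hc : ∀ j, c j = Ideal.Quotient.mk I (esymm (Fin r) k ((j : ℕ) + 2))) :
    (∀ y : MvPolynomial (Fin r) k ⧸ I,
        (∀ σ : Equiv.Perm (Fin r), φ σ y = y) ↔ y ∈ Algebra.adjoin k (Set.range c)) ∧
      AlgebraicIndependent k c := by
  obtain ⟨m, rfl⟩ : ∃ m, r = m + 1 := ⟨r - 1, by omega⟩
  have he1 : Ideal.Quotient.mk I (esymm (Fin (m+1)) k 1) = 0 := by
    rw [Ideal.Quotient.eq_zero_iff_mem, hI, esymm_one]
    exact Ideal.mem_span_singleton_self _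
  have hmem : ∀ f, f ∈ I ↔ (∑ i : Fin (m+1), X i) ∣ f := by
    intro f; rw [hI, Ideal.mem_span_singleton]
  refine ⟨fun y => ⟨fun hy => ?_, fun hy s => ?_⟩, ?_⟩
  · obtain ⟨f, rfl⟩ := Ideal.Quotient.mk_surjective y
    obtain ⟨h, hs, hd⟩ := PermInv.exists_symm hr f (fun s => by
      rw [← hmem, ← Ideal.Quotient.eq, ← hφ]; exact hy s)
    rw [← hmem, ← Ideal.Quotient.eq] at hd
    rw [← hd]
    obtain ⟨p, hp⟩ := MvPolynomial.esymmAlgHom_fin_surjective k (le_refl (m+1)) ⟨h, hs⟩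
    have hp' : aeval (fun i : Fin (m+1) ↦ esymm (Fin (m+1)) k (i + 1)) p = h := by
      rw [← esymmAlgHom_apply, hp]
    rw [← hp']
    have : Ideal.Quotient.mk I (aeval (fun i : Fin (m+1) ↦ esymm (Fin (m+1)) k (i + 1)) p)
        = aeval (fun i : Fin (m+1) ↦ Ideal.Quotient.mkₐ k I (esymm (Fin (m+1)) k (i + 1))) p := by
      rw [← Ideal.Quotient.mkₐ_eq_mk k, ← AlgHom.comp_apply, comp_aeval]
    rw [this]
    have hr : aeval (fun i : Fin (m+1) ↦ Ideal.Quotient.mkₐ k I (esymm (Fin (m+1)) k (i + 1))) p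
      ∈ Algebra.adjoin k (Set.range (fun i : Fin (m+1) ↦
          Ideal.Quotient.mkₐ k I (esymm (Fin (m+1)) k (i + 1)))) := by
      rw [Algebra.adjoin_range_eq_range_aeval]
      exact ⟨p, rfl⟩
    refine (Algebra.adjoin_le ?_ : _ ≤ Algebra.adjoin k (Set.range c)) hr
    rintro _ ⟨i, rfl⟩
    refine Fin.cases ?_ (fun j => ?_) i
    · have h0 : Ideal.Quotient.mkₐ k I (esymm (Fin (m+1)) k (((0 : Fin (m+1)) : ℕ) + 1)) = 0 := he1
      change Ideal.Quotient.mkₐ k I (esymm (Fin (m+1)) k (((0 : Fin (m+1)) : ℕ) + 1)) ∈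
        Algebra.adjoin k (Set.range c)
      rw [h0]
      exact Subalgebra.zero_mem _
    · exact Algebra.subset_adjoin ⟨j, by rw [hc]; simp [add_assoc]⟩
  · induction hy using Algebra.adjoin_induction with
    | mem x hx => obtain ⟨j, rfl⟩ := hx; rw [hc, hφ, rename_esymm]
    | algebraMap a => exact AlgHom.commutes _ _
    | add x y _ _ h1 h2 => rw [map_add, h1, h2]
    | mul x y _ _ h1 h2 => rw [map_mul, h1, h2]
  · rw [algebraicIndependent_iff]
    change ∀ p : MvPolynomial (Fin m) k, _
    intro p hp
    have hcc : c = fun j : Fin m => Ideal.Quotient.mkₐ k I (esymm (Fin (m+1)) k ((j : ℕ) + 2)) := by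
      funext j; rw [hc]; rfl
    rw [hcc] at hp
    change aeval (fun j : Fin m => Ideal.Quotient.mkₐ k I
      (esymm (Fin (m+1)) k ((j : ℕ) + 2))) p = 0 at hp
    rw [← comp_aeval, AlgHom.comp_apply, Ideal.Quotient.mkₐ_eq_mk,
      Ideal.Quotient.eq_zero_iff_mem, hmem] at hp
    obtain ⟨q, hq⟩ := hp
    have e1s : (∑ i : Fin (m+1), X i : MvPolynomial (Fin (m+1)) k).IsSymmetric := by
      rw [← esymm_one]; exact esymm_isSymmetric _ _ _
    have hpE : aeval (fun j : Fin m => esymm (Fin (m+1)) k ((j : ℕ) + 2)) p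
        = (esymmAlgHom (Fin (m+1)) k (m+1) (rename Fin.succ p)).val := by
      rw [esymmAlgHom_apply, aeval_rename]
      congr 2
    have hqs : q.IsSymmetric := by
      apply PermInv.symm_of_mul e1s (PermInv.irr_e1 (by omega)).ne_zero
      rw [← hq]
      exact hpE ▸ (esymmAlgHom (Fin (m+1)) k (m+1) (rename Fin.succ p)).2
    obtain ⟨Q, hQ⟩ := MvPolynomial.esymmAlgHom_fin_surjective k (le_refl (m+1)) ⟨q, hqs⟩
    have hX : (esymmAlgHom (Fin (m+1)) k (m+1) (X 0)).val = ∑ i : Fin (m+1), X i := by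
      rw [esymmAlgHom_apply, aeval_X, ← esymm_one]; simp
    have key : rename Fin.succ p = X 0 * Q := by
      apply MvPolynomial.esymmAlgHom_fin_injective k (le_refl (m+1))
      apply Subtype.ext
      rw [map_mul, hQ]
      change (esymmAlgHom (Fin (m+1)) k (m+1) (rename Fin.succ p)).val =
        (esymmAlgHom (Fin (m+1)) k (m+1) (X 0)).val * q
      rw [hX, ← hq, ← hpE]
    have := congrArg (aeval (Fin.cases 0 X : Fin (m+1) → MvPolynomial (Fin m) k)) key
    rw [aeval_rename, map_mul, aeval_X] at this
    simp only [Fin.cases_zero, zero_mul] at this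
    rw [← this]
    symm
    exact aeval_X_left_apply p
end

section
/- Let k be a field of characteristic 2 and r ≥ 1. In the ring S = k[x_1,…,x_r,A]/(x_1+⋯+x_r), let the group E_j = (Z/2)^j (1 ≤ j ≤ r−1) act with generator ε_i fixing all x_m and sending A to A − x_i. Then the ring of E_j-invariants of S is k[x_1,…,x_r, η_j]/(x_1+⋯+x_r), where η_j = ∏_{I ⊆ {1,…,j}} (A − ∑_{i∈I} x_i) is the product over all 2^j subsets I. -/
open MvPolynomial Finset

set_option maxHeartbeats 2000000

lemma aux_sum_symmDiff {R : Type*} [CommRing R] (h2 : (2 : R) = 0) {j : ℕ} (x : Fin j → R)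
    (i : Fin j) (s : Finset (Fin j)) :
    ∑ m ∈ symmDiff s {i}, x m = x i + ∑ m ∈ s, x m := by
  by_cases h : i ∈ s
  · have e : symmDiff s {i} = s.erase i := by
      ext m; simp only [Finset.mem_symmDiff, Finset.mem_singleton, Finset.mem_erase]
      grind
    rw [e, ← Finset.add_sum_erase s x h]
    linear_combination (-x i) * h2
  · have e : symmDiff s {i} = insert i s := by
      ext m; simp only [Finset.mem_symmDiff, Finset.mem_singleton, Finset.mem_insert]
      grind
    rw [e, Finset.sum_insert h]

lemma aux_prod_inv {R : Type*} [CommRing R] (h2 : (2 : R) = 0) {j : ℕ} (x : Fin j → R)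
    (a : R) (i : Fin j) :
    ∏ s : Finset (Fin j), (a - x i - ∑ m ∈ s, x m) = ∏ s : Finset (Fin j), (a - ∑ m ∈ s, x m) := by
  refine Fintype.prod_equiv
    (Function.Involutive.toPerm (fun s => symmDiff s {i}) (symmDiff_left_involutive {i})) _ _ ?_
  intro s
  simp only [Function.Involutive.coe_toPerm]
  rw [aux_sum_symmDiff h2]; ring

lemma aux_core {D : Type*} [CommRing D] [IsDomain D] (h2 : (2 : D) = 0) {j : ℕ} (x : Fin j → D)
    (hx : Function.Injective (fun s : Finset (Fin j) => ∑ m ∈ s, x m)) (N : ℕ) :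
    ∀ p : Polynomial D, p.natDegree < N →
      (∀ i, p.comp (Polynomial.X - Polynomial.C (x i)) = p) →
      ∃ q : Polynomial D, p = q.comp
        (∏ s : Finset (Fin j), (Polynomial.X - ∑ m ∈ s, Polynomial.C (x m))) := by
  have h2' : (2 : Polynomial D) = 0 := by
    have := congrArg (Polynomial.C) h2
    rwa [map_ofNat, map_zero] at this
  set η : Polynomial D := ∏ s : Finset (Fin j), (Polynomial.X - ∑ m ∈ s, Polynomial.C (x m)) with hη
  have hη' : η = ((Finset.univ.val.map (fun s : Finset (Fin j) => ∑ m ∈ s, x m)).map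
      (fun a => Polynomial.X - Polynomial.C a)).prod := by
    rw [hη, Multiset.map_map, Finset.prod]; simp
  have hmon : η.Monic := by
    rw [hη']; exact Polynomial.monic_multiset_prod_of_monic _ _ fun a _ => Polynomial.monic_X_sub_C a
  have hdeg : 1 ≤ η.natDegree := by
    rw [hη', Polynomial.natDegree_multiset_prod_X_sub_C_eq_card]
    simp [Nat.one_le_two_pow]
  have hηinv : ∀ i, η.comp (Polynomial.X - Polynomial.C (x i)) = η := by
    intro i
    rw [hη, Polynomial.prod_comp]
    rw [← aux_prod_inv h2' (fun m => Polynomial.C (x m)) Polynomial.X i]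
    refine Finset.prod_congr rfl fun s _ => ?_
    simp [← map_sum]
  induction N with
  | zero => intro p hp; omega
  | succ N ih =>
    intro p hp hinv
    by_cases hpz : p - Polynomial.C (p.eval 0) = 0
    · exact ⟨Polynomial.C (p.eval 0), by rw [Polynomial.C_comp]; exact sub_eq_zero.mp hpz⟩
    have hev : ∀ s : Finset (Fin j), p.eval (∑ m ∈ s, x m) = p.eval 0 := by
      intro s
      induction s using Finset.induction_on with
      | empty => simp
      | insert a s ha ihs =>
        rw [← ihs, Finset.sum_insert ha]
        conv_lhs => rw [← hinv a]
        simp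
    have hdvd : η ∣ p - Polynomial.C (p.eval 0) := by
      rw [hη', Multiset.prod_X_sub_C_dvd_iff_le_roots hpz, Multiset.le_iff_subset]
      · intro a ha
        simp only [Multiset.mem_map] at ha
        obtain ⟨s, -, rfl⟩ := ha
        rw [Polynomial.mem_roots hpz]
        simp [hev]
      · exact Multiset.Nodup.map hx Finset.univ.nodup
    obtain ⟨g, hg⟩ := hdvd
    have hg0 : g ≠ 0 := by rintro rfl; exact hpz (by simpa using hg)
    have hd : p.natDegree = η.natDegree + g.natDegree := by
      rw [← hmon.natDegree_mul' hg0, ← hg, Polynomial.natDegree_sub_C]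
    obtain ⟨q, hq⟩ := ih g (by omega) (by
      intro i
      have := congrArg (fun t => Polynomial.comp t (Polynomial.X - Polynomial.C (x i))) hg
      simp only [Polynomial.sub_comp, Polynomial.mul_comp, Polynomial.C_comp, hinv, hηinv] at this
      rw [hg] at this
      exact (mul_left_cancel₀ hmon.ne_zero this).symm)
    refine ⟨Polynomial.X * q + Polynomial.C (p.eval 0), ?_⟩
    rw [Polynomial.add_comp, Polynomial.mul_comp, Polynomial.X_comp, Polynomial.C_comp, ← hq, ← hg]
    ring

lemma aux_inj (k : Type*) [Field k] {n j : ℕ} (h : j ≤ n) :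
    Function.Injective (fun s : Finset (Fin j) =>
      ∑ m ∈ s, (X (Fin.castLE h m) : MvPolynomial (Fin n) k)) := by
  have key : ∀ (s : Finset (Fin j)) (i : Fin j),
      coeff (Finsupp.single (Fin.castLE h i) 1)
        (∑ m ∈ s, (X (Fin.castLE h m) : MvPolynomial (Fin n) k)) = if i ∈ s then 1 else 0 := by
    intro s i
    rw [coeff_sum]
    simp [coeff_X, Finsupp.single_left_inj]
  intro s t hst
  ext i
  have h1 := key s i
  have h2 := key t i
  simp only at hst
  rw [hst, h2] at h1
  by_cases a : i ∈ s <;> by_cases b : i ∈ t <;> simp_all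

/-- Let `k` be a field of characteristic 2, `r ≥ 1` and
`1 ≤ j ≤ r−1`. In `S = k[x₁,…,x_r,A]/(x₁+⋯+x_r)`, let `E_j = (ℤ/2)^j` act with
generator `ε_i` fixing every `x_m` and sending `A ↦ A − x_i` (the induced maps on
the quotient being encoded by the family `φ`). Then the ring of `E_j`-invariants
of `S` is `k[x₁,…,x_r,η_j]/(x₁+⋯+x_r)`, where
`η_j = ∏_{I ⊆ {1,…,j}} (A − ∑_{i∈I} x_i)`. Here `Sum.inl m` indexes `x_{m+1}`
and `Sum.inr ()` indexes `A`. -/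
theorem invariants_of_Ej_action
    (k : Type*) [Field k] [CharP k 2] (r j : ℕ) (hj : 1 ≤ j) (hjr : j ≤ r - 1)
    (I : Ideal (MvPolynomial (Fin r ⊕ Unit) k))
    (hI : I = Ideal.span ({∑ i : Fin r, X (Sum.inl i)} : Set (MvPolynomial (Fin r ⊕ Unit) k)))
    (φ : Fin j → ((MvPolynomial (Fin r ⊕ Unit) k ⧸ I) →ₐ[k] (MvPolynomial (Fin r ⊕ Unit) k ⧸ I)))
    (hφ : ∀ (i : Fin j) (f : MvPolynomial (Fin r ⊕ Unit) k),
      φ i (Ideal.Quotient.mk I f) =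
        Ideal.Quotient.mk I
          (MvPolynomial.aeval (R := k)
            (fun v : Fin r ⊕ Unit =>
              match v with
              | Sum.inl m => X (Sum.inl m)
              | Sum.inr _ =>
                  X (Sum.inr ()) -
                    X (Sum.inl (Fin.castLE (le_trans hjr (Nat.sub_le r 1)) i)))
            f))
    (η : MvPolynomial (Fin r ⊕ Unit) k)
    (hη : η = ∏ s ∈ (Finset.univ : Finset (Fin j)).powerset,
        (X (Sum.inr ()) -
          ∑ i ∈ s, X (Sum.inl (Fin.castLE (le_trans hjr (Nat.sub_le r 1)) i)))) :
    ∀ y : MvPolynomial (Fin r ⊕ Unit) k ⧸ I,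
      (∀ i : Fin j, φ i y = y) ↔
        y ∈ Algebra.adjoin k
          (insert (Ideal.Quotient.mk I η)
            (Set.range fun m : Fin r => Ideal.Quotient.mk I (X (Sum.inl m)))) := by
  classical
  intro y
  have h2k : (2 : k) = 0 := CharTwo.two_eq_zero
  obtain ⟨w, hwl, hwr, hw⟩ : ∃ w : Fin j → Fin r ⊕ Unit → MvPolynomial (Fin r ⊕ Unit) k,
      (∀ i m, w i (Sum.inl m) = X (Sum.inl m)) ∧
      (∀ i, w i (Sum.inr ()) = X (Sum.inr ()) -
        X (Sum.inl (Fin.castLE (le_trans hjr (Nat.sub_le r 1)) i))) ∧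
      (∀ i f, φ i (Ideal.Quotient.mk I f) = Ideal.Quotient.mk I (aeval (w i) f)) := by
    refine ⟨_, ?_, ?_, hφ⟩
    · intro i m; rfl
    · intro i; rfl
  clear hφ
  constructor
  · intro hy
    obtain ⟨n, rfl⟩ : ∃ n, r = n + 1 := ⟨r - 1, by omega⟩
    have hjn : j ≤ n := by omega
    have h2D : (2 : MvPolynomial (Fin n) k) = 0 := by
      have := congrArg (MvPolynomial.C (σ := Fin n)) h2k
      rwa [map_ofNat, map_zero] at this
    -- the map to D[T]
    let g : Fin (n+1) → MvPolynomial (Fin n) k :=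
      Fin.lastCases (-∑ i, X i) (fun i => X i)
    have hg1 : ∀ i : Fin n, g i.castSucc = X i := fun i => by simp [g]
    have hg2 : g (Fin.last n) = -∑ i, X i := by simp [g]
    let P : MvPolynomial (Fin (n+1) ⊕ Unit) k →ₐ[k] Polynomial (MvPolynomial (Fin n) k) :=
      aeval (Sum.elim (fun m => Polynomial.C (g m)) (fun _ => Polynomial.X))
    have hPl : ∀ m, P (X (Sum.inl m)) = Polynomial.C (g m) := fun m => by simp [P]
    have hPr : P (X (Sum.inr ())) = Polynomial.X := by simp [P]
    have hPI : ∀ a ∈ I, P a = 0 := by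
      intro a ha
      rw [hI, Ideal.mem_span_singleton] at ha
      obtain ⟨b, rfl⟩ := ha
      rw [map_mul, map_sum]
      simp only [hPl]
      rw [← map_sum, Fin.sum_univ_castSucc]
      simp [hg1, hg2]
    let σ0 : MvPolynomial (Fin n) k →ₐ[k] (MvPolynomial (Fin (n+1) ⊕ Unit) k ⧸ I) :=
      aeval (fun i => Ideal.Quotient.mk I (X (Sum.inl i.castSucc)))
    let σ : Polynomial (MvPolynomial (Fin n) k) →+* (MvPolynomial (Fin (n+1) ⊕ Unit) k ⧸ I) :=
      Polynomial.eval₂RingHom σ0.toRingHom (Ideal.Quotient.mk I (X (Sum.inr ())))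
    have hσC : ∀ d, σ (Polynomial.C d) = σ0 d := fun d => by simp [σ]
    have hσX : σ Polynomial.X = Ideal.Quotient.mk I (X (Sum.inr ())) := by simp [σ]
    have hσ0X : ∀ i, σ0 (X i) = Ideal.Quotient.mk I (X (Sum.inl i.castSucc)) := fun i => by
      simp [σ0]
    have hsum : Ideal.Quotient.mk I (∑ i : Fin (n+1), X (Sum.inl i)) = 0 := by
      rw [Ideal.Quotient.eq_zero_iff_mem, hI]; exact Ideal.mem_span_singleton_self _
    have hσg : ∀ m, σ0 (g m) = Ideal.Quotient.mk I (X (Sum.inl m)) := by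
      intro m
      refine Fin.lastCases ?_ (fun i => ?_) m
      · rw [hg2, map_neg, map_sum]
        simp only [hσ0X]
        rw [Fin.sum_univ_castSucc, map_add, map_sum] at hsum
        exact neg_eq_of_add_eq_zero_right hsum
      · rw [hg1, hσ0X]
    have hσP : ∀ f, σ (P f) = Ideal.Quotient.mk I f := by
      intro f
      have : σ.comp P.toRingHom = Ideal.Quotient.mk I := by
        refine MvPolynomial.ringHom_ext ?_ ?_
        · intro c
          have : P (C c) = Polynomial.C (C c) := by
            simp [P, Polynomial.algebraMap_apply, MvPolynomial.algebraMap_eq]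
          simp only [RingHom.comp_apply, AlgHom.toRingHom_eq_coe, RingHom.coe_coe]
          rw [this, hσC]
          simp only [σ0, aeval_C]
          rfl
        · rintro (m | ⟨⟩)
          · simp only [RingHom.comp_apply, AlgHom.toRingHom_eq_coe, RingHom.coe_coe]
            rw [hPl, hσC, hσg]
          · simp only [RingHom.comp_apply, AlgHom.toRingHom_eq_coe, RingHom.coe_coe]
            rw [hPr, hσX]
      exact RingHom.congr_fun this f
    obtain ⟨f, rfl⟩ := Ideal.Quotient.mk_surjective y
    have hgc : ∀ i : Fin j, g (Fin.castLE (le_trans hjr (Nat.sub_le (n+1) 1)) i)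
        = X (Fin.castLE hjn i) := fun i => by
      rw [← hg1]; rfl
    have hcomp : ∀ i : Fin j,
        (P f).comp (Polynomial.X - Polynomial.C (X (Fin.castLE hjn i))) = P f := by
      intro i
      have h1 := hy i
      rw [hw, Ideal.Quotient.eq] at h1
      have h3 := hPI _ h1
      rw [map_sub, sub_eq_zero] at h3
      rw [← h3]
      have : ((Polynomial.compRingHom
          (Polynomial.X - Polynomial.C (X (Fin.castLE hjn i)))).comp P.toRingHom) =
          P.toRingHom.comp (aeval (w i)).toRingHom := by
        refine MvPolynomial.ringHom_ext ?_ ?_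
        · intro c
          simp [P, Polynomial.algebraMap_apply]
        · rintro (m | ⟨⟩)
          · simp [hPl, hwl]
          · simp [hPl, hPr, hgc, hwr]
      rw [h3]
      exact (RingHom.congr_fun this f).trans h3
    obtain ⟨q, hq⟩ := aux_core h2D (fun i : Fin j => (X (Fin.castLE hjn i) : MvPolynomial (Fin n) k))
      (aux_inj k hjn) _ (P f) (Nat.lt_succ_self _) hcomp
    have hPη : P η = ∏ s : Finset (Fin j),
        (Polynomial.X - ∑ m ∈ s, Polynomial.C (X (Fin.castLE hjn m))) := by
      rw [hη, Finset.powerset_univ, map_prod]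
      refine Finset.prod_congr rfl fun s _ => ?_
      rw [map_sub, map_sum, hPr]
      simp only [hPl, hgc]
    rw [← hPη] at hq
    rw [← hσP f, hq]
    generalize hB : Algebra.adjoin k
          (insert (Ideal.Quotient.mk I η)
            (Set.range fun m : Fin (n+1) => Ideal.Quotient.mk I (X (Sum.inl m)))) = B
    have hBη : Ideal.Quotient.mk I η ∈ B := by
      rw [← hB]; exact Algebra.subset_adjoin (Set.mem_insert _ _)
    have hBx : ∀ m, Ideal.Quotient.mk I (X (Sum.inl m)) ∈ B := by
      intro m
      rw [← hB]; exact Algebra.subset_adjoin (Set.mem_insert_of_mem _ ⟨m, rfl⟩)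
    have hB0 : ∀ d, σ0 d ∈ B := by
      intro d
      induction d using MvPolynomial.induction_on with
      | C a => simp only [σ0, aeval_C]; exact B.algebraMap_mem a
      | add p q hp hq => rw [map_add]; exact B.add_mem hp hq
      | mul_X p i hp => rw [map_mul, hσ0X]; exact B.mul_mem hp (hBx _)
    clear hq
    induction q using Polynomial.induction_on' with
    | add p q hp hq => rw [Polynomial.add_comp, map_add]; exact B.add_mem hp hq
    | monomial m a =>
      rw [Polynomial.monomial_comp, map_mul, map_pow, hσC, hσP]
      exact B.mul_mem (hB0 _) (B.pow_mem hBη _)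
  · intro hy i
    have h2S : (2 : MvPolynomial (Fin r ⊕ Unit) k) = 0 := by
      have := congrArg (MvPolynomial.C (σ := Fin r ⊕ Unit)) h2k
      rwa [map_ofNat, map_zero] at this
    have hle : Algebra.adjoin k
          (insert (Ideal.Quotient.mk I η)
            (Set.range fun m : Fin r => Ideal.Quotient.mk I (X (Sum.inl m)))) ≤
        AlgHom.equalizer (φ i) (AlgHom.id k _) := by
      rw [Algebra.adjoin_le_iff]
      have key : ∀ f, aeval (w i) f = f → Ideal.Quotient.mk I f ∈
          AlgHom.equalizer (φ i) (AlgHom.id k _) := by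
        intro f hf
        rw [AlgHom.mem_equalizer, AlgHom.id_apply, hw, hf]
      refine Set.insert_subset (key η ?_) ?_
      · rw [hη, Finset.powerset_univ, map_prod]
        rw [← aux_prod_inv h2S
          (fun m : Fin j => X (Sum.inl (Fin.castLE (le_trans hjr (Nat.sub_le r 1)) m)))
          (X (Sum.inr ())) i]
        refine Finset.prod_congr rfl fun s _ => ?_
        simp [hwl, hwr]
      · rintro _ ⟨m, rfl⟩
        exact key _ (by rw [aeval_X, hwl])
    exact hle hy
end
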